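/- For nonzero integers s, t and odd positive integer q with gcd(s,q)=1, the quadratic Gauss sum G(s,t;q) = Σ_{b mod q} e((s b² + t b)/q) equals ε_q √q (s/q) e(−(4s)^{-1} t²/q), where (s/q) is the Jacobi symbol, ε_q = 1 if q ≡ 1 mod 4 and ε_q = i if q ≡ 3 mod 4, and (4s)^{-1} denotes the inverse of 4s modulo q. -/

import Mathlib

open Finset

/-- `e(x) = exp(2πi x)`. -/
noncomputable def e (x : ℝ) : ℂ := Complex.exp (2 * Real.pi * Complex.I * x)

/-!
Completing the square reduces the claim to `t = 0`. For `s = 1` the modulus `√q` comes from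
`G(1) G(-1) = q`, and the argument from Gauss's product: the alternating sum of the Gaussian
binomial coefficients of order `q - 1` is `∏ (1 - r ^ (2 j + 1))`, and when `r` is a primitive
`q`-th root of unity its terms are powers of `r` with quadratic exponents. This makes `G(1)` a
product of the numbers `2 i sin (2π (2 j + 1) / q)`, whose signs are known. For general `s`, the
relation `G(a; b) G(b; a) = G(1; a b)` mirrors quadratic reciprocity for the Jacobi symbol, so a
descent in the style of the Euclidean algorithm determines `G(s; q)`.
-/

open ZMod ComplexConjugate

section GaussBinom

variable {R : Type*} [CommSemiring R]

/-- The Gaussian binomial coefficient `[n choose k]` evaluated at `r`, defined by the Pascal-type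
recursion so that it makes sense where the usual quotient of products has a zero denominator. -/
def gaussBinom (r : R) : ℕ → ℕ → R
  | _, 0 => 1
  | 0, _ + 1 => 0
  | n + 1, k + 1 => gaussBinom r n k + r ^ (k + 1) * gaussBinom r n (k + 1)

variable (r : R)

@[simp] lemma gaussBinom_zero_right (n : ℕ) : gaussBinom r n 0 = 1 := by
  cases n <;> rfl

@[simp] lemma gaussBinom_zero_succ (k : ℕ) : gaussBinom r 0 (k + 1) = 0 := rfl

lemma gaussBinom_succ_succ (n k : ℕ) :
    gaussBinom r (n + 1) (k + 1) = gaussBinom r n k + r ^ (k + 1) * gaussBinom r n (k + 1) := rfl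

lemma gaussBinom_eq_zero_of_lt {n k : ℕ} (h : n < k) : gaussBinom r n k = 0 := by
  induction n generalizing k with
  | zero =>
    obtain ⟨k, rfl⟩ := Nat.exists_eq_add_one.mpr h
    rfl
  | succ n ih =>
    obtain ⟨k, rfl⟩ := Nat.exists_eq_add_one.mpr (n.succ_pos.trans h)
    rw [gaussBinom_succ_succ, ih (by omega), ih (by omega), mul_zero, add_zero]

end GaussBinom

section GaussBinom

variable {R : Type*} [CommRing R] (r : R)

lemma one_sub_pow_mul_gaussBinom_succ_succ (n k : ℕ) :
    (1 - r ^ (k + 1)) * gaussBinom r (n + 1) (k + 1) = (1 - r ^ (n + 1)) * gaussBinom r n k := by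
  induction n generalizing k with
  | zero => cases k <;> simp [gaussBinom_succ_succ]
  | succ n ih =>
    rw [gaussBinom_succ_succ]
    cases k with
    | zero =>
      rw [gaussBinom_zero_right]
      linear_combination r * ih 0 + r * (1 - r ^ (n + 1)) * gaussBinom_zero_right r n
    | succ k =>
      linear_combination r ^ (k + 2) * ih (k + 1) + r * ih k -
        r * (1 - r ^ (n + 1)) * gaussBinom_succ_succ r n k

lemma sum_neg_one_pow_mul_gaussBinom_add_two (n : ℕ) :
    ∑ k ∈ range (n + 3), (-1) ^ k * gaussBinom r (n + 2) k =
      (1 - r ^ (n + 1)) * ∑ k ∈ range (n + 1), (-1) ^ k * gaussBinom r n k := by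
  let shift (k : ℕ) : R := (-1) ^ k * (r ^ k * gaussBinom r (n + 1) k)
  have h_telescope : ∑ k ∈ range (n + 2), (shift (k + 1) - shift k) = -1 := by
    rw [sum_range_sub]
    simp [shift, gaussBinom_eq_zero_of_lt r (Nat.lt_succ_self (n + 1))]
  calc ∑ k ∈ range (n + 3), (-1) ^ k * gaussBinom r (n + 2) k
    _ = ∑ k ∈ range (n + 2), (shift (k + 1) - shift k -
          (-1) ^ k * ((1 - r ^ k) * gaussBinom r (n + 1) k)) + 1 := by
      rw [sum_range_succ', pow_zero, one_mul, gaussBinom_zero_right]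
      congr 1
      refine sum_congr rfl fun k _ ↦ ?_
      rw [gaussBinom_succ_succ]
      ring
    _ = -∑ k ∈ range (n + 2), (-1) ^ k * ((1 - r ^ k) * gaussBinom r (n + 1) k) := by
      rw [sum_sub_distrib, h_telescope]
      ring
    _ = ∑ k ∈ range (n + 1), (-1) ^ k * ((1 - r ^ (k + 1)) * gaussBinom r (n + 1) (k + 1)) := by
      rw [sum_range_succ']
      simp [pow_succ]
    _ = (1 - r ^ (n + 1)) * ∑ k ∈ range (n + 1), (-1) ^ k * gaussBinom r n k := by
      simp only [one_sub_pow_mul_gaussBinom_succ_succ, mul_sum, mul_left_comm]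

lemma sum_neg_one_pow_mul_gaussBinom_two_mul (m : ℕ) :
    ∑ k ∈ range (2 * m + 1), (-1) ^ k * gaussBinom r (2 * m) k =
      ∏ j ∈ range m, (1 - r ^ (2 * j + 1)) := by
  induction m with
  | zero => simp
  | succ m ih =>
    rw [mul_add_one, sum_neg_one_pow_mul_gaussBinom_add_two, ih, prod_range_succ, mul_comm]

end GaussBinom

section PrimitiveRoot

lemma pow_choose_two_mul_gaussBinom_of_isPrimitiveRoot {R : Type*} [CommRing R] [IsDomain R]
    {ζ : R} {n k : ℕ} (hζ : IsPrimitiveRoot ζ (n + 1)) (hk : k ≤ n) :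
    ζ ^ (k + 1).choose 2 * gaussBinom ζ n k = (-1) ^ k := by
  induction k with
  | zero => simp
  | succ k ih =>
    have h_vanish : gaussBinom ζ (n + 1) (k + 1) = 0 := by
      have h := one_sub_pow_mul_gaussBinom_succ_succ ζ n k
      rw [hζ.pow_eq_one, sub_self, zero_mul] at h
      exact (mul_eq_zero.mp h).resolve_left
        (sub_ne_zero.mpr (hζ.pow_ne_one_of_pos_of_lt k.succ_ne_zero (by omega)).symm)
    rw [gaussBinom_succ_succ] at h_vanish
    rw [Nat.choose_succ_succ' (k + 1) 1, Nat.choose_one_right, pow_add]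
    linear_combination ζ ^ (k + 1).choose 2 * h_vanish - ih (by omega)

lemma sum_inv_pow_choose_two_of_isPrimitiveRoot {K : Type*} [Field K] {ζ : K} {m : ℕ}
    (hζ : IsPrimitiveRoot ζ (2 * m + 1)) :
    ∑ k ∈ range (2 * m + 1), (ζ ^ (k + 1).choose 2)⁻¹ = ∏ j ∈ range m, (1 - ζ ^ (2 * j + 1)) := by
  rw [← sum_neg_one_pow_mul_gaussBinom_two_mul]
  refine sum_congr rfl fun k hk ↦ inv_eq_of_mul_eq_one_right ?_
  rw [mul_left_comm, pow_choose_two_mul_gaussBinom_of_isPrimitiveRoot hζ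
    (Nat.lt_succ_iff.mp (mem_range.mp hk)), ← mul_pow, neg_one_mul, neg_neg, one_pow]

end PrimitiveRoot

section QuadGaussSum

variable {R R' : Type*} [CommRing R] [Fintype R]

/-- The quadratic Gauss sum `∑ x, ψ (a x²)` of an additive character `ψ` of a finite ring. For the
standard character of `ZMod q` this is the sum `G(a, 0; q)`. -/
def quadGaussSum [CommSemiring R'] (ψ : AddChar R R') (a : R) : R' :=
  ∑ x, ψ (a * x ^ 2)

lemma quadGaussSum_mul_sq [CommSemiring R'] (ψ : AddChar R R') (a : R) {u : R}
    (hu : IsUnit u) : quadGaussSum ψ (a * u ^ 2) = quadGaussSum ψ a := by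
  simp only [quadGaussSum, mul_assoc, ← mul_pow]
  exact hu.unit.mulLeft_bijective.sum_comp fun x ↦ ψ (a * x ^ 2)

lemma sum_addChar_quadratic [CommSemiring R'] (ψ : AddChar R R') {s u : R} (t : R)
    (hu : 4 * s * u = 1) :
    ∑ x, ψ (s * x ^ 2 + t * x) = quadGaussSum ψ s * ψ (-(u * t ^ 2)) := by
  rw [quadGaussSum, sum_mul, ← Equiv.sum_comp (Equiv.subRight (2 * u * t))]
  refine sum_congr rfl fun x _ ↦ ?_
  rw [← AddChar.map_add_eq_mul, Equiv.subRight_apply]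
  congr 1
  linear_combination (u * t ^ 2 - t * x) * hu

lemma quadGaussSum_mul_quadGaussSum_neg [CommRing R'] [IsDomain R'] {ψ : AddChar R R'}
    (hψ : ψ.IsPrimitive) {a : R} (ha : IsUnit (2 * a)) :
    quadGaussSum ψ a * quadGaussSum ψ (-a) = Fintype.card R := by
  classical
  calc quadGaussSum ψ a * quadGaussSum ψ (-a)
    _ = ∑ y, ∑ x, ψ (a * x ^ 2) * ψ (-a * y ^ 2) := by
      rw [quadGaussSum, quadGaussSum, sum_mul_sum, sum_comm]
    _ = ∑ y, ∑ d, ψ (a * d ^ 2) * ψ (y * (2 * a * d)) := by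
      refine sum_congr rfl fun y _ ↦ ?_
      rw [← Equiv.sum_comp (Equiv.addRight y)]
      refine sum_congr rfl fun d _ ↦ ?_
      rw [← AddChar.map_add_eq_mul, ← AddChar.map_add_eq_mul, Equiv.coe_addRight]
      congr 1
      ring
    _ = ∑ d, ψ (a * d ^ 2) * if d = 0 then (Fintype.card R : R') else 0 := by
      rw [sum_comm]
      simp only [← mul_sum, AddChar.sum_mulShift _ hψ, ha.mul_right_eq_zero, Nat.cast_ite,
        Nat.cast_zero]
    _ = Fintype.card R := by simp

lemma conj_quadGaussSum (ψ : AddChar R ℂ) (a : R) :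
    conj (quadGaussSum ψ a) = quadGaussSum ψ (-a) := by
  simp only [quadGaussSum, map_sum, ← AddChar.map_neg_eq_conj, neg_mul]

lemma norm_quadGaussSum {ψ : AddChar R ℂ} (hψ : ψ.IsPrimitive) {a : R} (ha : IsUnit (2 * a)) :
    ‖quadGaussSum ψ a‖ = √(Fintype.card R) := by
  have h := quadGaussSum_mul_quadGaussSum_neg hψ ha
  rw [← conj_quadGaussSum, Complex.mul_conj'] at h
  rw [← Real.sqrt_sq (norm_nonneg _)]
  congr 1
  exact_mod_cast h

end QuadGaussSum

section StdAddChar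

lemma sum_range_natCast_zmod {M : Type*} [AddCommMonoid M] (n : ℕ) [NeZero n] (f : ZMod n → M) :
    ∑ b ∈ range n, f b = ∑ x, f x :=
  sum_nbij' (fun b ↦ (b : ZMod n)) ZMod.val (by simp) (fun x _ ↦ mem_range.mpr x.val_lt)
    (fun _ hb ↦ val_cast_of_lt (mem_range.mp hb)) (by simp) (by simp)

lemma isUnit_two_zmod {n : ℕ} (hn : Odd n) : IsUnit (2 : ZMod n) := by
  exact_mod_cast (isUnit_iff_coprime 2 n).mpr hn.coprime_two_left

lemma isPrimitiveRoot_stdAddChar {n : ℕ} [NeZero n] {c : ZMod n} (hc : IsUnit c) :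
    IsPrimitiveRoot (stdAddChar c) n where
  pow_eq_one := by
    rw [← AddChar.map_nsmul_eq_pow, nsmul_eq_mul, natCast_self, zero_mul, AddChar.map_zero_eq_one]
  dvd_of_pow_eq_one l hl := by
    rw [← AddChar.map_nsmul_eq_pow, ← AddChar.map_zero_eq_one (stdAddChar (N := n)),
      injective_stdAddChar.eq_iff, nsmul_eq_mul, hc.mul_left_eq_zero] at hl
    exact (natCast_eq_zero_iff l n).mp hl

lemma stdAddChar_sub_stdAddChar_neg {n : ℕ} [NeZero n] (c : ℕ) :
    stdAddChar (c : ZMod n) - stdAddChar (-c : ZMod n) =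
      Complex.I * (2 * Real.sin (2 * Real.pi * c / n) : ℝ) := by
  have h_pos := stdAddChar_coe (N := n) c
  have h_neg := stdAddChar_coe (N := n) (-c)
  push_cast at h_pos h_neg
  rw [h_pos, h_neg]
  push_cast
  rw [Complex.two_sin]
  ring_nf
  rw [Complex.I_sq]
  ring

lemma stdAddChar_natCast_mul_intCast {n a b : ℕ} [NeZero n] [NeZero b] (hn : n = a * b) (k : ℤ) :
    stdAddChar (a * k : ZMod n) = stdAddChar (k : ZMod b) := by
  have ha : (a : ℂ) ≠ 0 := by
    rintro h
    exact NeZero.ne n (by simp [hn, Nat.cast_eq_zero.mp h])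
  have h := stdAddChar_coe (N := n) (a * k)
  push_cast at h
  rw [h, stdAddChar_coe, hn]
  congr 1
  push_cast
  field_simp

theorem quadGaussSum_mul_of_coprime {a b : ℕ} [NeZero a] [NeZero b] (h : a.Coprime b) (s : ℤ) :
    quadGaussSum stdAddChar (s * b : ZMod a) * quadGaussSum stdAddChar (s * a : ZMod b) =
      quadGaussSum stdAddChar (s : ZMod (a * b)) := by
  have h_unit : IsUnit (a + b : ZMod (a * b)) := by
    have h_coprime : (a + b).Coprime (a * b) := Nat.Coprime.mul_right
      (Nat.coprime_self_add_left.mpr h.symm) (Nat.coprime_add_self_left.mpr h)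
    exact_mod_cast (isUnit_iff_coprime (a + b) (a * b)).mpr h_coprime
  have h_zero : (a * b : ZMod (a * b)) = 0 := by exact_mod_cast natCast_self (a * b)
  -- Pulled back to `z` modulo `a * b`, the product is the sum of `ψ (s * (a ^ 2 + b ^ 2) * z ^ 2)`,
  -- and `a ^ 2 + b ^ 2 = (a + b) ^ 2` modulo `a * b`.
  rw [← quadGaussSum_mul_sq _ (s : ZMod (a * b)) h_unit, quadGaussSum, quadGaussSum, sum_mul_sum,
    ← Fintype.sum_prod_type', quadGaussSum, ← (chineseRemainder h).toEquiv.sum_comp]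
  refine sum_congr rfl fun z _ ↦ ?_
  obtain ⟨z, rfl⟩ := intCast_surjective z
  have h_fst := stdAddChar_natCast_mul_intCast (mul_comm a b) (s * b * z ^ 2)
  have h_snd := stdAddChar_natCast_mul_intCast (rfl : a * b = a * b) (s * a * z ^ 2)
  push_cast at h_fst h_snd
  simp only [RingEquiv.toEquiv_eq_coe, EquivLike.coe_coe, map_intCast, Prod.fst_intCast,
    Prod.snd_intCast, ← h_fst, ← h_snd, ← AddChar.map_add_eq_mul]
  congr 1
  linear_combination (-2 * s * z ^ 2 : ZMod (a * b)) * h_zero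

end StdAddChar

section Sign

lemma one_sub_stdAddChar_neg_two_pow {n : ℕ} [NeZero n] (c : ℕ) :
    1 - stdAddChar (-2 : ZMod n) ^ c =
      stdAddChar (-c : ZMod n) * (Complex.I * (2 * Real.sin (2 * Real.pi * c / n) : ℝ)) := by
  rw [← stdAddChar_sub_stdAddChar_neg, mul_sub, ← AddChar.map_add_eq_mul,
    ← AddChar.map_add_eq_mul, neg_add_cancel, AddChar.map_zero_eq_one, ← AddChar.map_nsmul_eq_pow,
    nsmul_eq_mul]
  ring_nf

lemma prod_stdAddChar_neg_odd {n : ℕ} [NeZero n] (m : ℕ) :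
    ∏ j ∈ range m, stdAddChar (-(2 * j + 1 : ℕ) : ZMod n) = stdAddChar (-m ^ 2 : ZMod n) := by
  induction m with
  | zero => simp
  | succ m ih =>
    rw [prod_range_succ, ih, ← AddChar.map_add_eq_mul]
    congr 1
    push_cast
    ring

lemma sum_stdAddChar_sq_add_self (m : ℕ) :
    ∑ x : ZMod (2 * m + 1), stdAddChar (x ^ 2 + x) =
      ∏ j ∈ range m, (1 - stdAddChar (-2 : ZMod (2 * m + 1)) ^ (2 * j + 1)) := by
  rw [← sum_inv_pow_choose_two_of_isPrimitiveRoot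
    (isPrimitiveRoot_stdAddChar (isUnit_two_zmod ⟨m, rfl⟩).neg), ← sum_range_natCast_zmod]
  refine sum_congr rfl fun k _ ↦ ?_
  rw [← AddChar.map_nsmul_eq_pow, ← AddChar.map_neg_eq_inv, nsmul_eq_mul]
  congr 1
  have h_choose := congrArg (Nat.cast : ℕ → ZMod (2 * m + 1)) (Nat.add_one_mul_choose_eq k 1)
  rw [Nat.choose_one_right] at h_choose
  push_cast at h_choose
  linear_combination h_choose

lemma quadGaussSum_stdAddChar_one_eq_prod (m : ℕ) :
    quadGaussSum stdAddChar (1 : ZMod (2 * m + 1)) =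
      ∏ j ∈ range m,
        (Complex.I * (2 * Real.sin (2 * Real.pi * (2 * j + 1 : ℕ) / (2 * m + 1 : ℕ)) : ℝ)) := by
  have h_zero : (2 * m + 1 : ZMod (2 * m + 1)) = 0 := by
    exact_mod_cast natCast_self (2 * m + 1)
  have h_inv : 4 * 1 * (m : ZMod (2 * m + 1)) ^ 2 = 1 := by
    linear_combination (2 * m - 1 : ZMod (2 * m + 1)) * h_zero
  have h_square := sum_addChar_quadratic stdAddChar 1 h_inv
  simp only [one_mul, one_pow, mul_one, sum_stdAddChar_sq_add_self,
    one_sub_stdAddChar_neg_two_pow, prod_mul_distrib, prod_stdAddChar_neg_odd] at h_square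
  rw [prod_mul_distrib]
  rw [mul_comm] at h_square
  exact ((AddChar.val_isUnit stdAddChar (-m ^ 2 : ZMod (2 * m + 1))).mul_right_cancel
    h_square).symm

lemma sin_two_pi_mul_div_nonneg {c n : ℕ} (h : 2 * c ≤ n) :
    0 ≤ Real.sin (2 * Real.pi * c / n) := by
  refine Real.sin_nonneg_of_nonneg_of_le_pi (by positivity)
    (div_le_of_le_mul₀ (by positivity) Real.pi_nonneg ?_)
  have h' : (2 * c : ℝ) ≤ n := by exact_mod_cast h
  nlinarith [Real.pi_pos]

lemma sin_two_pi_mul_div_nonpos {c n : ℕ} (hn : n ≤ 2 * c) (hc : c ≤ n) :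
    Real.sin (2 * Real.pi * c / n) ≤ 0 := by
  have h := sin_two_pi_mul_div_nonneg (c := n - c) (n := n) (by omega)
  rcases n.eq_zero_or_pos with rfl | h_pos
  · simp
  rw [Nat.cast_sub hc, mul_sub, sub_div, mul_div_cancel_right₀ _ (by positivity),
    Real.sin_two_pi_sub] at h
  exact neg_nonneg.mp h

lemma neg_one_pow_mul_prod_sin_nonneg (m : ℕ) :
    0 ≤ (-1) ^ (m / 2) *
      ∏ j ∈ range m, 2 * Real.sin (2 * Real.pi * (2 * j + 1 : ℕ) / (2 * m + 1 : ℕ)) := by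
  let factor (j : ℕ) : ℝ := 2 * Real.sin (2 * Real.pi * (2 * j + 1 : ℕ) / (2 * m + 1 : ℕ))
  have h_first : 0 ≤ ∏ j ∈ range (m - m / 2), factor j := prod_nonneg fun j hj ↦ by
    rw [mem_range] at hj
    exact mul_nonneg zero_le_two (sin_two_pi_mul_div_nonneg (by omega))
  have h_last : 0 ≤ ∏ j ∈ range (m / 2), -factor (m - m / 2 + j) := prod_nonneg fun j hj ↦ by
    rw [mem_range] at hj
    exact neg_nonneg.mpr (mul_nonpos_of_nonneg_of_nonpos zero_le_two
      (sin_two_pi_mul_div_nonpos (by omega) (by omega)))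
  have h_split := prod_range_add factor (m - m / 2) (m / 2)
  rw [Nat.sub_add_cancel (Nat.div_le_self m 2)] at h_split
  rw [prod_neg, card_range] at h_last
  rw [h_split, mul_left_comm]
  exact mul_nonneg h_first h_last

/-- The factor `ε_n` in the value of the quadratic Gauss sum modulo `n`. It is meant for odd `n`:
even `n` fall into the `else` branch together with `n ≡ 3 mod 4`. -/
noncomputable def gaussEps (n : ℕ) : ℂ := if n % 4 = 1 then 1 else Complex.I

lemma norm_gaussEps (n : ℕ) : ‖gaussEps n‖ = 1 := by
  rw [gaussEps]
  split_ifs <;> simp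

lemma gaussEps_ne_zero (n : ℕ) : gaussEps n ≠ 0 :=
  norm_ne_zero_iff.mp (norm_gaussEps n ▸ one_ne_zero)

lemma conj_gaussEps {n : ℕ} (hn : Odd n) : conj (gaussEps n) = gaussEps n * jacobiSym (-1) n := by
  rw [jacobiSym.at_neg_one hn]
  rcases Nat.odd_mod_four_iff.mp (Nat.odd_iff.mp hn) with h | h
  · simp [gaussEps, h, χ₄_nat_one_mod_four h]
  · simp [gaussEps, h, χ₄_nat_three_mod_four h]

lemma gaussEps_mul {a b : ℕ} (ha : Odd a) (hb : Odd b) :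
    gaussEps (a * b) = gaussEps a * gaussEps b * (-1) ^ (a / 2 * (b / 2)) := by
  have h_one {n : ℕ} (hn : n % 4 = 1) : (-1 : ℂ) ^ (n / 2) = 1 := by
    exact_mod_cast congrArg (Int.cast : ℤ → ℂ) (neg_one_pow_div_two_of_one_mod_four hn)
  have h_three {n : ℕ} (hn : n % 4 = 3) : (-1 : ℂ) ^ (n / 2) = -1 := by
    exact_mod_cast congrArg (Int.cast : ℤ → ℂ) (neg_one_pow_div_two_of_three_mod_four hn)
  rw [pow_mul]
  rcases Nat.odd_mod_four_iff.mp (Nat.odd_iff.mp ha) with h_a | h_a <;>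
  rcases Nat.odd_mod_four_iff.mp (Nat.odd_iff.mp hb) with h_b | h_b <;>
  simp [gaussEps, Nat.mul_mod a b 4, h_a, h_b, h_one, h_three]

lemma I_pow_eq_gaussEps_mul (m : ℕ) :
    Complex.I ^ m = gaussEps (2 * m + 1) * (-1) ^ (m / 2) := by
  rw [gaussEps]
  rcases m.even_or_odd' with ⟨c, rfl | rfl⟩
  · rw [if_pos (by omega), pow_mul, Complex.I_sq, Nat.mul_div_cancel_left _ two_pos, one_mul]
  · rw [if_neg (by omega), pow_succ, pow_mul, Complex.I_sq, show (2 * c + 1) / 2 = c by omega,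
      mul_comm]

theorem quadGaussSum_stdAddChar_one {n : ℕ} [NeZero n] (hn : Odd n) :
    quadGaussSum stdAddChar (1 : ZMod n) = gaussEps n * √n := by
  have h_norm := norm_quadGaussSum (isPrimitive_stdAddChar n) (a := 1)
    (by simpa only [mul_one] using isUnit_two_zmod hn)
  obtain ⟨m, rfl⟩ := hn
  have h_sign := neg_one_pow_mul_prod_sin_nonneg m
  set P := (-1) ^ (m / 2) *
    ∏ j ∈ range m, 2 * Real.sin (2 * Real.pi * (2 * j + 1 : ℕ) / (2 * m + 1 : ℕ)) with hP
  have h_polar : quadGaussSum stdAddChar (1 : ZMod (2 * m + 1)) = gaussEps (2 * m + 1) * P := by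
    rw [quadGaussSum_stdAddChar_one_eq_prod, prod_mul_distrib, prod_const, card_range,
      I_pow_eq_gaussEps_mul, ← Complex.ofReal_prod, hP]
    push_cast
    ring
  rw [h_polar, norm_mul, norm_gaussEps, one_mul, Complex.norm_real, Real.norm_of_nonneg h_sign,
    ZMod.card] at h_norm
  rw [h_polar, h_norm]

end Sign

section Reciprocity

lemma quadGaussSum_intCast_neg_of_eq {n : ℕ} [NeZero n] (hn : Odd n) {s : ℤ}
    (h : quadGaussSum stdAddChar (s : ZMod n) = gaussEps n * √n * jacobiSym s n) :
    quadGaussSum stdAddChar ((-s : ℤ) : ZMod n) = gaussEps n * √n * jacobiSym (-s) n := by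
  rw [Int.cast_neg, ← conj_quadGaussSum, h, neg_eq_neg_one_mul s, jacobiSym.mul_left, map_mul,
    map_mul, Complex.conj_ofReal, conj_gaussEps hn, map_intCast]
  push_cast
  ring

lemma quadGaussSum_natCast_of_swap {n r : ℕ} [NeZero n] [NeZero r] (hn : Odd n) (hr : Odd r)
    (hc : n.Coprime r)
    (h : quadGaussSum stdAddChar (n : ZMod r) = gaussEps r * √r * jacobiSym n r) :
    quadGaussSum stdAddChar (r : ZMod n) = gaussEps n * √n * jacobiSym r n := by
  have h_swap : quadGaussSum stdAddChar (r : ZMod n) * (gaussEps r * √r * jacobiSym n r) =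
      gaussEps n * gaussEps r * (-1) ^ (n / 2 * (r / 2)) * (√n * √r) := by
    have h_mul := quadGaussSum_mul_of_coprime hc 1
    simpa only [Int.cast_one, one_mul, h, quadGaussSum_stdAddChar_one (hn.mul hr),
      gaussEps_mul hn hr, Nat.cast_mul, Real.sqrt_mul (Nat.cast_nonneg n),
      Complex.ofReal_mul] using h_mul
  have h_recip : (jacobiSym r n : ℂ) = (-1) ^ (n / 2 * (r / 2)) * jacobiSym n r := by
    rw [jacobiSym.quadratic_reciprocity hr hn, mul_comm (r / 2)]
    push_cast
    rfl
  have h_sq : (jacobiSym n r : ℂ) ^ 2 = 1 := by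
    exact_mod_cast jacobiSym.sq_one (a := n) (b := r) (by simpa using hc)
  have h_sqrt : (√r : ℂ) ≠ 0 := by
    exact_mod_cast (Real.sqrt_pos.mpr (Nat.cast_pos.mpr hr.pos)).ne'
  rw [h_recip]
  apply mul_right_cancel₀ (mul_ne_zero (gaussEps_ne_zero r) h_sqrt)
  linear_combination (jacobiSym n r : ℂ) * h_swap -
    quadGaussSum stdAddChar (r : ZMod n) * gaussEps r * √r * h_sq

lemma exists_odd_lt_modEq_or_modEq_neg {n : ℕ} (hn : Odd n) {s : ℤ} (hs : ¬(n : ℤ) ∣ s) :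
    ∃ r : ℕ, Odd r ∧ r < n ∧ (s ≡ r [ZMOD n] ∨ s ≡ -r [ZMOD n]) := by
  have h_pos : (0 : ℤ) < n := by exact_mod_cast hn.pos
  obtain ⟨r, hr⟩ := Int.eq_ofNat_of_zero_le (Int.emod_nonneg s h_pos.ne')
  have h_lt : r < n := by exact_mod_cast hr ▸ Int.emod_lt_of_pos s h_pos
  have h_ne : r ≠ 0 := by
    rintro rfl
    exact hs (Int.dvd_of_emod_eq_zero hr)
  have h_mod : s ≡ r [ZMOD n] := by rw [← hr]; exact (Int.mod_modEq s n).symm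
  rcases r.even_or_odd with h_even | h_odd
  · refine ⟨n - r, Nat.Odd.sub_even h_lt.le hn h_even, by omega, .inr (h_mod.trans ?_)⟩
    rw [Nat.cast_sub h_lt.le, neg_sub]
    exact (Int.sub_modulus_modEq_iff.mpr .rfl).symm
  · exact ⟨r, h_odd, h_lt, .inl h_mod⟩

lemma quadGaussSum_intCast_of_modEq {n : ℕ} [NeZero n] {s s' : ℤ} (hss' : s ≡ s' [ZMOD n])
    (h : quadGaussSum stdAddChar (s' : ZMod n) = gaussEps n * √n * jacobiSym s' n) :
    quadGaussSum stdAddChar (s : ZMod n) = gaussEps n * √n * jacobiSym s n := by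
  rwa [(intCast_eq_intCast_iff s s' n).mpr hss', jacobiSym.mod_left' hss']

theorem quadGaussSum_intCast {n : ℕ} [NeZero n] (hn : Odd n) {s : ℤ} (hs : s.gcd n = 1) :
    quadGaussSum stdAddChar (s : ZMod n) = gaussEps n * √n * jacobiSym s n := by
  by_cases h_dvd : (n : ℤ) ∣ s
  · obtain rfl : n = 1 := (Int.gcd_eq_natAbs_right h_dvd).symm.trans hs
    rw [Subsingleton.elim (s : ZMod 1) 1, quadGaussSum_stdAddChar_one hn, jacobiSym.one_right,
      Int.cast_one, mul_one]
  obtain ⟨r, h_odd, h_lt, h_mod⟩ := exists_odd_lt_modEq_or_modEq_neg hn h_dvd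
  have : NeZero r := ⟨h_odd.pos.ne'⟩
  have h_coprime : n.Coprime r := by
    have h_gcd : (r : ℤ).gcd n = 1 := by
      rcases h_mod with h_mod | h_mod <;> rw [← Int.gcd_emod, h_mod.eq, Int.gcd_emod] at hs
      · exact hs
      · rwa [Int.neg_gcd] at hs
    simpa [Nat.coprime_comm] using h_gcd
  have h_swap : quadGaussSum stdAddChar ((r : ℤ) : ZMod n) = gaussEps n * √n * jacobiSym r n := by
    rw [Int.cast_natCast]
    refine quadGaussSum_natCast_of_swap hn h_odd h_coprime ?_
    exact_mod_cast quadGaussSum_intCast h_odd (s := n) (by simpa using h_coprime)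
  rcases h_mod with h_mod | h_mod
  · exact quadGaussSum_intCast_of_modEq h_mod h_swap
  · exact quadGaussSum_intCast_of_modEq h_mod (quadGaussSum_intCast_neg_of_eq hn h_swap)
termination_by n

end Reciprocity

lemma e_intCast_div (n : ℕ) [NeZero n] (k : ℤ) : e (k / n) = stdAddChar (k : ZMod n) := by
  rw [e, stdAddChar_coe]
  congr 1
  push_cast
  ring

theorem stmt_0 (q : ℕ) (hq0 : 0 < q) (hq : Odd q) (s t u : ℤ)
    (hs : s ≠ 0) (ht : t ≠ 0) (hsq : Int.gcd s q = 1)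
    (hu : (4 * s * u) % (q : ℤ) = 1) :
    ∑ b ∈ Finset.range q, e (((s * (b : ℤ) ^ 2 + t * (b : ℤ) : ℤ) : ℝ) / q) =
      (if q % 4 = 1 then (1 : ℂ) else Complex.I) * Real.sqrt q * (jacobiSym s q : ℂ) *
        e (((-(u * t ^ 2) : ℤ) : ℝ) / q) := by
  have : NeZero q := ⟨hq0.ne'⟩
  have h_inv : 4 * (s : ZMod q) * u = 1 := by
    have h := intCast_mod (4 * s * u) q
    rw [hu] at h
    exact_mod_cast h.symm
  have h_square := sum_addChar_quadratic stdAddChar (t : ZMod q) h_inv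
  rw [quadGaussSum_intCast hq hsq, ← sum_range_natCast_zmod] at h_square
  simp only [e_intCast_div]
  push_cast
  exact h_square
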